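/- Let H ∈ (0,1) and let R(t,s) = t^{2H} + s^{2H} − (1/2)( (t+s)^{2H} + |t−s|^{2H} ) for t,s ≥ 0 be the covariance function of one-dimensional sub-fractional Brownian motion S^H. Then there exists a constant κ_H > 0 such that for every integer m ≥ 1 and all times 0 < s₁,…,s_m, t < ∞: inf_{a∈ℝ^m} [ R(t,t) − 2 Σ_{j=1}^m a_j R(t,s_j) + Σ_{i=1}^m Σ_{j=1}^m a_i a_j R(s_i,s_j) ] ≥ κ_H · min{|t−s₁|^{2H},…,|t−s_m|^{2H}, t^{2H}}. Equivalently, for a centered Gaussian process S^H with covariance R, Var(S^H_t | S^H_{s₁},…,S^H_{s_m}) ≥ κ_H min{|t−s₁|^{2H},…,|t−s_m|^{2H}, t^{2H}}, i.e. sub-fractional Brownian motion satisfies strong local nondeterminism with index H. -/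

import Mathlib

open Real
open scoped Topology

noncomputable section

/-- The covariance kernel of sub-fractional Brownian motion with parameter `H`. -/
def Rsubfbm (H t s : ℝ) : ℝ :=
  t ^ (2 * H) + s ^ (2 * H) - (1 / 2) * ((t + s) ^ (2 * H) + |t - s| ^ (2 * H))

section

open MeasureTheory Set

/-- The integrand of the spectral representation of `|x| ^ p`. -/
def spectralIntegrand (p x l : ℝ) : ℝ := (1 - cos (x * l)) * l ^ (-1 - p)

/-- The normalizing constant of the spectral representation of `|x| ^ p`. -/
def spectralConst (p : ℝ) : ℝ := ∫ l in Ioi (0 : ℝ), spectralIntegrand p 1 l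

lemma spectralIntegrand_nonneg (p x : ℝ) {l : ℝ} (hl : 0 < l) : 0 ≤ spectralIntegrand p x l :=
  mul_nonneg (by linarith [cos_le_one (x * l)]) (rpow_nonneg hl.le _)

lemma measurable_spectralIntegrand (p x : ℝ) : Measurable (spectralIntegrand p x) := by
  unfold spectralIntegrand
  fun_prop

lemma integrableOn_spectralIntegrand_one {p : ℝ} (hp : 0 < p) (hp2 : p < 2) :
    IntegrableOn (spectralIntegrand p 1) (Ioi 0) := by
  rw [← Ioc_union_Ioi_eq_Ioi zero_le_one]
  refine IntegrableOn.union ?_ ?_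
  · have h : IntegrableOn (fun l : ℝ => l ^ (1 - p)) (Ioc 0 1) := by
      rw [← intervalIntegrable_iff_integrableOn_Ioc_of_le zero_le_one]
      exact intervalIntegral.intervalIntegrable_rpow' (by linarith)
    refine Integrable.mono' h (measurable_spectralIntegrand p 1).aestronglyMeasurable ?_
    filter_upwards [ae_restrict_mem measurableSet_Ioc] with l hl
    rw [norm_of_nonneg (spectralIntegrand_nonneg p 1 hl.1)]
    have h2 : l ^ (1 - p) = l ^ 2 * l ^ (-1 - p) := by
      rw [← rpow_natCast, ← rpow_add hl.1]
      congr 1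
      push_cast
      ring
    rw [h2, spectralIntegrand, one_mul]
    refine mul_le_mul_of_nonneg_right ?_ (rpow_nonneg hl.1.le _)
    nlinarith [one_sub_sq_div_two_le_cos (x := l), sq_nonneg l]
  · have h : IntegrableOn (fun l : ℝ => 2 * l ^ (-1 - p)) (Ioi 1) :=
      (integrableOn_Ioi_rpow_of_lt (by linarith) zero_lt_one).const_mul 2
    refine Integrable.mono' h (measurable_spectralIntegrand p 1).aestronglyMeasurable ?_
    filter_upwards [ae_restrict_mem measurableSet_Ioi] with l hl
    have hl0 : (0 : ℝ) < l := zero_lt_one.trans hl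
    rw [norm_of_nonneg (spectralIntegrand_nonneg p 1 hl0)]
    exact mul_le_mul_of_nonneg_right (by linarith [neg_one_le_cos (1 * l)])
      (rpow_nonneg hl0.le _)

lemma spectralConst_pos {p : ℝ} (hp : 0 < p) (hp2 : p < 2) : 0 < spectralConst p := by
  rw [spectralConst, setIntegral_pos_iff_support_of_nonneg_ae _
    (integrableOn_spectralIntegrand_one hp hp2)]
  · refine lt_of_lt_of_le ?_ (measure_mono (s := Ioo 0 1) ?_)
    · simp
    · intro l hl
      refine ⟨(mul_pos ?_ (rpow_pos_of_pos hl.1 _)).ne', hl.1⟩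
      have := cos_lt_cos_of_nonneg_of_le_pi le_rfl (by linarith [pi_gt_three, hl.2]) hl.1
      rw [cos_zero] at this
      rw [one_mul]
      linarith
  · filter_upwards [ae_restrict_mem measurableSet_Ioi] with l hl
    exact spectralIntegrand_nonneg p 1 hl

lemma spectralIntegrand_abs (p x l : ℝ) :
    spectralIntegrand p |x| l = spectralIntegrand p x l := by
  rcases abs_choice x with h | h <;> simp [spectralIntegrand, h]

lemma spectralIntegrand_of_pos (p : ℝ) {x l : ℝ} (hx : 0 < x) (hl : 0 < l) :
    spectralIntegrand p x l = x ^ (1 + p) * spectralIntegrand p 1 (x * l) := by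
  have h : x ^ (1 + p) * x ^ (-1 - p) = 1 := by
    rw [← rpow_add hx]
    simp
  rw [spectralIntegrand, spectralIntegrand, one_mul, mul_rpow hx.le hl.le]
  linear_combination (-(1 - cos (x * l)) * l ^ (-1 - p)) * h

lemma integrableOn_spectralIntegrand {p : ℝ} (hp : 0 < p) (hp2 : p < 2) (x : ℝ) :
    IntegrableOn (spectralIntegrand p x) (Ioi 0) := by
  rw [← funext (spectralIntegrand_abs p x)]
  rcases (abs_nonneg x).eq_or_lt with hx | hx
  · rw [← hx]
    refine integrableOn_zero.congr_fun (fun l _ => ?_) measurableSet_Ioi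
    simp [spectralIntegrand]
  · refine IntegrableOn.congr_fun ?_
      (fun l hl => (spectralIntegrand_of_pos p hx hl).symm) measurableSet_Ioi
    refine Integrable.const_mul ?_ _
    have := (integrableOn_Ioi_comp_mul_left_iff (spectralIntegrand p 1) 0 hx).2
    rw [mul_zero] at this
    exact this (integrableOn_spectralIntegrand_one hp hp2)

lemma integral_spectralIntegrand {p : ℝ} (hp : 0 < p) (x : ℝ) :
    ∫ l in Ioi (0 : ℝ), spectralIntegrand p x l = spectralConst p * |x| ^ p := by
  rw [← funext (spectralIntegrand_abs p x)]
  rcases (abs_nonneg x).eq_or_lt with hx | hx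
  · rw [← hx]
    simp [spectralIntegrand, zero_rpow hp.ne']
  · rw [setIntegral_congr_fun measurableSet_Ioi
      (fun l hl => spectralIntegrand_of_pos p hx hl), integral_const_mul,
      integral_comp_mul_left_Ioi (spectralIntegrand p 1) 0 hx, mul_zero, rpow_add hx,
      rpow_one, smul_eq_mul, ← spectralConst]
    field_simp

/-- `f` is integrable on the positive half-line, with integral `c`. -/
def HasIntegralIoi (f : ℝ → ℝ) (c : ℝ) : Prop :=
  IntegrableOn f (Ioi 0) ∧ ∫ l in Ioi (0 : ℝ), f l = c

namespace HasIntegralIoi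

variable {f g : ℝ → ℝ} {c d : ℝ}

lemma add (hf : HasIntegralIoi f c) (hg : HasIntegralIoi g d) :
    HasIntegralIoi (fun l => f l + g l) (c + d) :=
  ⟨hf.1.add hg.1, by rw [integral_add hf.1 hg.1, hf.2, hg.2]⟩

lemma sub (hf : HasIntegralIoi f c) (hg : HasIntegralIoi g d) :
    HasIntegralIoi (fun l => f l - g l) (c - d) :=
  ⟨hf.1.sub hg.1, by rw [integral_sub hf.1 hg.1, hf.2, hg.2]⟩

lemma const_mul (k : ℝ) (hf : HasIntegralIoi f c) :
    HasIntegralIoi (fun l => k * f l) (k * c) :=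
  ⟨hf.1.const_mul k, by rw [integral_const_mul, hf.2]⟩

lemma sum {ι : Type*} {s : Finset ι} {f : ι → ℝ → ℝ} {c : ι → ℝ}
    (h : ∀ i, HasIntegralIoi (f i) (c i)) :
    HasIntegralIoi (fun l => ∑ i ∈ s, f i l) (∑ i ∈ s, c i) :=
  ⟨integrable_finsetSum _ fun i _ => (h i).1, by
    rw [integral_finsetSum _ fun i _ => (h i).1]
    exact Finset.sum_congr rfl fun i _ => (h i).2⟩

lemma congr (hf : HasIntegralIoi f c) (h : ∀ l, f l = g l) (hcd : c = d) :
    HasIntegralIoi g d := by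
  rwa [← funext h, ← hcd]

lemma mono (hf : HasIntegralIoi f c) (hg : HasIntegralIoi g d)
    (h : ∀ l, 0 < l → f l ≤ g l) : c ≤ d := by
  rw [← hf.2, ← hg.2]
  exact setIntegral_mono_on hf.1 hg.1 measurableSet_Ioi h

end HasIntegralIoi

lemma hasIntegralIoi_spectralIntegrand {p : ℝ} (hp : 0 < p) (hp2 : p < 2) (x : ℝ) :
    HasIntegralIoi (spectralIntegrand p x) (spectralConst p * |x| ^ p) :=
  ⟨integrableOn_spectralIntegrand hp hp2 x, integral_spectralIntegrand hp x⟩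

/-- The spectral representation of the covariance of sub-fractional Brownian motion. -/
lemma hasIntegralIoi_Rsubfbm {H : ℝ} (hH : H ∈ Ioo (0 : ℝ) 1) {x y : ℝ} (hx : 0 < x)
    (hy : 0 < y) :
    HasIntegralIoi (fun l => (1 - cos (x * l)) * (1 - cos (y * l)) * l ^ (-1 - 2 * H))
      (spectralConst (2 * H) * Rsubfbm H x y) := by
  have key := hasIntegralIoi_spectralIntegrand (p := 2 * H) (by linarith [hH.1])
    (by linarith [hH.2])
  refine (((key x).add (key y)).sub (((key (x + y)).add (key (x - y))).const_mul (1 / 2))).congr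
    (fun l => ?_) ?_
  · simp only [spectralIntegrand, add_mul, sub_mul, cos_add, cos_sub]
    ring
  · rw [Rsubfbm, abs_of_pos hx, abs_of_pos hy, abs_of_pos (add_pos hx hy)]
    ring

/-- The cosine transform of the Fejér kernel is a triangle function. -/
lemma hasIntegralIoi_cos_mul_fejer (r u : ℝ) :
    HasIntegralIoi (fun l => cos (u * l) * spectralIntegrand 1 r l)
      (spectralConst 1 * ((|u + r| + |u - r|) / 2 - |u|)) := by
  have key := hasIntegralIoi_spectralIntegrand (p := 1) one_pos one_lt_two
  refine ((((key (u + r)).add (key (u - r))).const_mul (1 / 2)).sub (key u)).congr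
    (fun l => ?_) ?_
  · simp only [spectralIntegrand, add_mul, sub_mul, cos_add, cos_sub]
    ring
  · simp only [rpow_one]
    ring

lemma triangle_eq_zero {r u : ℝ} (hr : 0 ≤ r) (h : r ≤ |u|) :
    (|u + r| + |u - r|) / 2 - |u| = 0 := by
  rcases le_abs.1 h with h | h
  · rw [abs_of_nonneg (by linarith : 0 ≤ u + r), abs_of_nonneg (by linarith : 0 ≤ u - r),
      abs_of_nonneg (by linarith : 0 ≤ u)]
    ring
  · rw [abs_of_nonpos (by linarith : u + r ≤ 0), abs_of_nonpos (by linarith : u - r ≤ 0),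
      abs_of_nonpos (by linarith : u ≤ 0)]
    ring

lemma hasIntegralIoi_one_sub_cos_mul_cos_mul_fejer (r t x : ℝ) :
    HasIntegralIoi (fun l => (1 - cos (x * l)) * (cos (t * l) * spectralIntegrand 1 r l))
      (spectralConst 1 * (((|t + r| + |t - r|) / 2 - |t|)
        - (((|t + x + r| + |t + x - r|) / 2 - |t + x|)
          + ((|t - x + r| + |t - x - r|) / 2 - |t - x|)) / 2)) := by
  refine ((hasIntegralIoi_cos_mul_fejer r t).sub
    (((hasIntegralIoi_cos_mul_fejer r (t + x)).add
      (hasIntegralIoi_cos_mul_fejer r (t - x))).const_mul (1 / 2))).congr (fun l => ?_) ?_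
  · simp only [add_mul, sub_mul, cos_add, cos_sub]
    ring
  · ring

/-- A weighted form of `2 * g * h ≤ g ^ 2 + h ^ 2`, with the Fejér kernel in the role of `h`. -/
lemma neg_two_mul_fejer_sub_le (H r t x g : ℝ) {l : ℝ} (hl : 0 < l) :
    -2 * x * (g * (cos (t * l) * spectralIntegrand 1 r l))
        - 2 * x ^ 2 * spectralIntegrand (2 - 2 * H) r l ≤ g ^ 2 * l ^ (-1 - 2 * H) := by
  simp only [spectralIntegrand]
  have hwv : l ^ (-1 - 2 * H) * l ^ (-1 - (2 - 2 * H)) = (l ^ (-1 - 1 : ℝ)) ^ 2 := by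
    rw [← rpow_add hl, pow_two, ← rpow_add hl]
    congr 1
    ring
  have hw : 0 < l ^ (-1 - 2 * H) := rpow_pos_of_pos hl _
  have hv : 0 < l ^ (-1 - (2 - 2 * H)) := rpow_pos_of_pos hl _
  have hc := cos_sq_le_one (t * l)
  have hf0 : 0 ≤ 1 - cos (r * l) := by linarith [cos_le_one (r * l)]
  have hf2 : 1 - cos (r * l) ≤ 2 := by linarith [neg_one_le_cos (r * l)]
  generalize l ^ (-1 - 2 * H) = w at *
  generalize l ^ (-1 - (2 - 2 * H)) = v at *
  generalize l ^ (-1 - 1 : ℝ) = q at *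
  generalize cos (t * l) = c at *
  generalize 1 - cos (r * l) = f at *
  have hfc : f ^ 2 * c ^ 2 ≤ 2 * f := by
    nlinarith [mul_nonneg (sq_nonneg f) (sub_nonneg.2 hc), mul_nonneg hf0 (sub_nonneg.2 hf2)]
  have hsq : 0 ≤ w * (w * g ^ 2 + 2 * x * g * c * f * q + x ^ 2 * (f ^ 2 * c ^ 2) * v) := by
    have := sq_nonneg (w * g + x * f * c * q)
    linear_combination this - (x ^ 2 * f ^ 2 * c ^ 2) * hwv
  have hsq' := nonneg_of_mul_nonneg_right hsq hw
  have := mul_le_mul_of_nonneg_left hfc (mul_nonneg (sq_nonneg x) hv.le)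
  linarith

/-- The spectral representation of the prediction error. -/
lemma hasIntegralIoi_prediction_error {H : ℝ} (hH : H ∈ Ioo (0 : ℝ) 1) {ι : Type*} [Fintype ι]
    {s : ι → ℝ} {t : ℝ} (hs : ∀ j, 0 < s j) (ht : 0 < t) (a : ι → ℝ) :
    HasIntegralIoi
      (fun l => ((1 - cos (t * l)) - ∑ j, a j * (1 - cos (s j * l))) ^ 2 * l ^ (-1 - 2 * H))
      (spectralConst (2 * H) * (Rsubfbm H t t - 2 * ∑ j, a j * Rsubfbm H t (s j) +
        ∑ i, ∑ j, a i * a j * Rsubfbm H (s i) (s j))) := by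
  refine (((hasIntegralIoi_Rsubfbm hH ht ht).sub ((HasIntegralIoi.sum (s := Finset.univ)
    fun j => (hasIntegralIoi_Rsubfbm hH ht (hs j)).const_mul (a j)).const_mul 2)).add
    (HasIntegralIoi.sum (s := Finset.univ) fun i => HasIntegralIoi.sum (s := Finset.univ)
      fun j => (hasIntegralIoi_Rsubfbm hH (hs i) (hs j)).const_mul (a i * a j))).congr
    (fun l => ?_) ?_
  · have h1 : ∑ j, a j * ((1 - cos (t * l)) * (1 - cos (s j * l)) * l ^ (-1 - 2 * H)) =
        (1 - cos (t * l)) * (∑ j, a j * (1 - cos (s j * l))) * l ^ (-1 - 2 * H) := by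
      rw [Finset.mul_sum, Finset.sum_mul]
      exact Finset.sum_congr rfl fun j _ => by ring
    have h2 : ∑ i, ∑ j, a i * a j *
          ((1 - cos (s i * l)) * (1 - cos (s j * l)) * l ^ (-1 - 2 * H)) =
        (∑ j, a j * (1 - cos (s j * l))) ^ 2 * l ^ (-1 - 2 * H) := by
      rw [pow_two, Finset.sum_mul_sum, Finset.sum_mul]
      refine Finset.sum_congr rfl fun i _ => ?_
      rw [Finset.sum_mul]
      exact Finset.sum_congr rfl fun j _ => by ring
    rw [h1, h2]
    ring
  · simp only [mul_add, mul_sub, Finset.mul_sum, mul_left_comm]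

lemma prediction_error_nonneg {H : ℝ} (hH : H ∈ Ioo (0 : ℝ) 1) {ι : Type*} [Fintype ι]
    {s : ι → ℝ} {t : ℝ} (hs : ∀ j, 0 < s j) (ht : 0 < t) (a : ι → ℝ) :
    0 ≤ Rsubfbm H t t - 2 * ∑ j, a j * Rsubfbm H t (s j) +
        ∑ i, ∑ j, a i * a j * Rsubfbm H (s i) (s j) := by
  have hQ := hasIntegralIoi_prediction_error hH hs ht a
  refine nonneg_of_mul_nonneg_right (hQ.2 ▸ setIntegral_nonneg measurableSet_Ioi fun l hl =>
    mul_nonneg (sq_nonneg _) (rpow_nonneg (le_of_lt hl) _))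
    (spectralConst_pos (by linarith [hH.1]) (by linarith [hH.2]))

/-- The prediction error is bounded below in terms of any distance `r` separating `t` from the
origin and from the observation times. -/
lemma prediction_error_ge {H : ℝ} (hH : H ∈ Ioo (0 : ℝ) 1) {ι : Type*} [Fintype ι] {s : ι → ℝ}
    {t r : ℝ} (hs : ∀ j, 0 < s j) (hr : 0 < r) (hrt : r ≤ t) (hrs : ∀ j, r ≤ |t - s j|)
    (a : ι → ℝ) :
    spectralConst 1 ^ 2 / (8 * spectralConst (2 * H) * spectralConst (2 - 2 * H)) *
        r ^ (2 * H) ≤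
      Rsubfbm H t t - 2 * ∑ j, a j * Rsubfbm H t (s j) +
        ∑ i, ∑ j, a i * a j * Rsubfbm H (s i) (s j) := by
  have ht : 0 < t := hr.trans_le hrt
  have hC : 0 < spectralConst (2 * H) :=
    spectralConst_pos (by linarith [hH.1]) (by linarith [hH.2])
  have hD : 0 < spectralConst (2 - 2 * H) :=
    spectralConst_pos (by linarith [hH.2]) (by linarith [hH.1])
  set g : ℝ → ℝ := fun l => (1 - cos (t * l)) - ∑ j, a j * (1 - cos (s j * l)) with hg
  have hQ := hasIntegralIoi_prediction_error hH hs ht a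
  have htr : (|t + r| + |t - r|) / 2 - |t| = 0 :=
    triangle_eq_zero hr.le (by rwa [abs_of_pos ht])
  have hB : HasIntegralIoi (fun l => g l * (cos (t * l) * spectralIntegrand 1 r l))
      (-(spectralConst 1 * r / 2)) := by
    refine ((hasIntegralIoi_one_sub_cos_mul_cos_mul_fejer r t t).sub (HasIntegralIoi.sum
      (s := Finset.univ) fun j =>
        (hasIntegralIoi_one_sub_cos_mul_cos_mul_fejer r t (s j)).const_mul (a j))).congr
      (fun l => ?_) ?_
    · simp only [hg, sub_mul (1 - cos (t * l)), Finset.sum_mul, mul_assoc]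
    · have h0 : (|t + t + r| + |t + t - r|) / 2 - |t + t| = 0 :=
        triangle_eq_zero hr.le (by rw [abs_of_pos (by linarith)]; linarith)
      rw [Finset.sum_eq_zero fun j _ => ?_, htr, h0, sub_self]
      · simp only [zero_add, zero_sub, abs_neg, abs_of_pos hr, abs_zero]
        ring
      · rw [htr, triangle_eq_zero hr.le (hrs j), triangle_eq_zero hr.le]
        · ring
        · rw [abs_of_pos (add_pos ht (hs j))]
          linarith [hs j]
  have hE := hasIntegralIoi_spectralIntegrand (p := 2 - 2 * H) (by linarith [hH.2])
    (by linarith [hH.1]) r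
  obtain ⟨x, hx⟩ :
    ∃ x, x = spectralConst 1 * r ^ (2 * H - 1) / (4 * spectralConst (2 - 2 * H)) := ⟨_, rfl⟩
  have main := ((hB.const_mul (-2 * x)).sub (hE.const_mul (2 * x ^ 2))).mono hQ
    fun l hl => neg_two_mul_fejer_sub_le H r t x (g l) hl
  have hp1 : r ^ (2 * H - 1) * r = r ^ (2 * H) := by
    rw [← rpow_add_one hr.ne']
    congr 1
    ring
  have hp2 : r ^ (2 * H - 1) * r ^ (2 - 2 * H) = r := by
    rw [← rpow_add hr]
    convert rpow_one r using 2
    ring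
  rw [abs_of_pos hr] at main
  rw [← mul_le_mul_iff_right₀ hC]
  refine le_trans (le_of_eq ?_) main
  rw [hx, ← hp1]
  generalize spectralConst (2 - 2 * H) = D at *
  generalize r ^ (2 - 2 * H) = u at *
  field_simp
  linear_combination (16 * spectralConst 1 ^ 2) * hp2

end

/-- Corollary 6.3. Sub-fractional Brownian motion satisfies strong local
nondeterminism with index `H`: there is `κ > 0` such that for all `m ≥ 1`,
`0 < s₁,…,s_m, t` and all `a ∈ ℝ^m`, the prediction-error quadratic form of the kernel `R`
is at least `κ · min{|t−s₁|^{2H},…,|t−s_m|^{2H}, t^{2H}}`. -/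
theorem stmt_19 (H : ℝ) (hH : H ∈ Set.Ioo (0 : ℝ) 1) :
    ∃ κ : ℝ, 0 < κ ∧ ∀ (m : ℕ) (s : Fin (m + 1) → ℝ) (t : ℝ),
      (∀ j, 0 < s j) → 0 < t → ∀ a : Fin (m + 1) → ℝ,
        κ * min (Finset.univ.inf' Finset.univ_nonempty fun j => |t - s j| ^ (2 * H))
            (t ^ (2 * H)) ≤
          Rsubfbm H t t - 2 * ∑ j, a j * Rsubfbm H t (s j) +
            ∑ i, ∑ j, a i * a j * Rsubfbm H (s i) (s j) := by
  have hK : 0 < spectralConst 1 := spectralConst_pos one_pos one_lt_two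
  have hC : 0 < spectralConst (2 * H) :=
    spectralConst_pos (by linarith [hH.1]) (by linarith [hH.2])
  have hD : 0 < spectralConst (2 - 2 * H) :=
    spectralConst_pos (by linarith [hH.2]) (by linarith [hH.1])
  have hH2 : 0 < 2 * H := by linarith [hH.1]
  refine ⟨spectralConst 1 ^ 2 / (8 * spectralConst (2 * H) * spectralConst (2 - 2 * H)),
    by positivity, fun m s t hs ht a => ?_⟩
  set M := min (Finset.univ.inf' Finset.univ_nonempty fun j => |t - s j| ^ (2 * H))
    (t ^ (2 * H))
  have hMt : M ≤ t ^ (2 * H) := min_le_right _ _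
  have hMs : ∀ j, M ≤ |t - s j| ^ (2 * H) := fun j =>
    (min_le_left _ _).trans (Finset.inf'_le _ (Finset.mem_univ j))
  rcases le_or_gt M 0 with hM | hM
  · exact (mul_nonpos_of_nonneg_of_nonpos (by positivity) hM).trans
      (prediction_error_nonneg hH hs ht a)
  · have hr : (M ^ (2 * H)⁻¹) ^ (2 * H) = M := rpow_inv_rpow hM.le hH2.ne'
    have hle : ∀ y : ℝ, 0 ≤ y → M ≤ y ^ (2 * H) → M ^ (2 * H)⁻¹ ≤ y := fun y hy h =>
      (rpow_le_rpow_iff (rpow_nonneg hM.le _) hy hH2).1 (hr.symm ▸ h)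
    have := prediction_error_ge hH hs (rpow_pos_of_pos hM _) (hle t ht.le hMt)
      (fun j => hle _ (abs_nonneg _) (hMs j)) a
    rwa [hr] at this
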